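/- Let M, J ⊆ ℝ be open intervals, a ∈ M, and f : {x ∈ M | x > a} → ℝ a continuous function such that the closure of the image of f in J is compact. Let F̄ be the closure in M × J of the graph of f. Then for every vector bundle E over M × J with a connection ∇ of class C¹, every ∇-parallel C¹ section of E defined on (M × J) \ F̄ extends to a ∇-parallel section on all of M × J. -/

import Mathlib

open MeasureTheory Set
open scoped Topology

/-!
Parallel transport along vertical segments gives a `C¹` frame over `M × Ioo c d` in which the
connection form `θ` vanishes on vertical vectors. In this frame a parallel section `w` is constant
on vertical segments avoiding `F̄`, and `w (·, y)` satisfies `w' = -θ (1, 0) w`. By continuity the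
value of `w` below the graph and its value above the graph both solve this linear equation with
the coefficient taken at `(x, f x)`. They agree for `x < a`, where nothing separates bottom and top,
hence at `a` by continuity, and for `x > a` by Grönwall's inequality. The common value is the
extension.
-/

section Calculus

variable {𝕜 E₁ E₂ F : Type*} [RCLike 𝕜] [NormedAddCommGroup E₁] [NormedSpace 𝕜 E₁]
  [NormedAddCommGroup E₂] [NormedSpace 𝕜 E₂] [NormedAddCommGroup F] [NormedSpace 𝕜 F]

theorem contDiffOn_one_of_partial {f : E₁ × E₂ → F} {f₁ : E₁ × E₂ → E₁ →L[𝕜] F}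
    {f₂ : E₁ × E₂ → E₂ →L[𝕜] F} {s : Set (E₁ × E₂)} (hs : IsOpen s)
    (hf₁ : ∀ p ∈ s, HasFDerivAt (fun x => f (x, p.2)) (f₁ p) p.1)
    (hf₂ : ∀ p ∈ s, HasFDerivAt (fun y => f (p.1, y)) (f₂ p) p.2)
    (hc₁ : ContinuousOn f₁ s) (hc₂ : ContinuousOn f₂ s) : ContDiffOn 𝕜 1 f s := by
  have hf : ∀ p ∈ s, HasFDerivAt f ((f₁ p).coprod (f₂ p)) p := fun p hp =>
    (hasStrictFDerivAt_uncurry_coprod (f := fun x y => f (x, y)) (f₁ := fun x y => f₁ (x, y))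
      (f₂ := fun x y => f₂ (x, y)) (Filter.mem_of_superset (hs.mem_nhds hp) hf₁)
      (Filter.mem_of_superset (hs.mem_nhds hp) hf₂) (hc₁.continuousAt (hs.mem_nhds hp))
      (hc₂.continuousAt (hs.mem_nhds hp))).hasFDerivAt
  rw [← zero_add 1, contDiffOn_succ_iff_fderiv_of_isOpen hs, contDiffOn_zero]
  refine ⟨fun p hp => (hf p hp).differentiableAt.differentiableWithinAt, by simp, ?_⟩
  have hc : ContinuousOn (fun p => (f₁ p).coprod (f₂ p)) s :=
    (ContinuousLinearMap.coprodEquivL 𝕜).continuous.comp_continuousOn (hc₁.prodMk hc₂)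
  exact hc.congr fun p hp => (hf p hp).fderiv

theorem hasDerivAt_of_forall_eval {X : Type*} [TopologicalSpace X] [CompactSpace X]
    {B B' : 𝕜 → C(X, F)} {x : 𝕜}
    (hB : ∀ᶠ t in 𝓝 x, ∀ y, HasDerivAt (fun s => B s y) (B' t y) t)
    (hB' : ContinuousAt B' x) : HasDerivAt B (B' x) x := by
  rw [hasDerivAt_iff_isLittleO, Asymptotics.isLittleO_iff]
  intro ε hε
  obtain ⟨δ, hδ, hball⟩ := Metric.eventually_nhds_iff_ball.1
    (hB.and (hB'.eventually (Metric.closedBall_mem_nhds _ hε)))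
  filter_upwards [Metric.ball_mem_nhds x hδ] with t ht
  rw [ContinuousMap.norm_le _ (by positivity)]
  intro y
  have hderiv : ∀ s ∈ Metric.ball x δ, HasDerivWithinAt (fun s => B s y - s • B' x y)
      (B' s y - B' x y) (Metric.ball x δ) s := fun s hs => by
    simpa only [one_smul] using
      (((hball s hs).1 y).fun_sub ((hasDerivAt_id' s).smul_const (B' x y))).hasDerivWithinAt
  have hbound : ∀ s ∈ Metric.ball x δ, ‖B' s y - B' x y‖ ≤ ε := fun s hs =>
    ((B' s - B' x).norm_coe_le_norm y).trans (mem_closedBall_iff_norm.1 (hball s hs).2)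
  have hle := (convex_ball x δ).norm_image_sub_le_of_norm_hasDerivWithin_le hderiv hbound
    (Metric.mem_ball_self hδ) ht
  calc ‖(B t - B x - (t - x) • B' x) y‖
      = ‖(B t y - t • B' x y) - (B x y - x • B' x y)‖ := by
        simp only [ContinuousMap.sub_apply, ContinuousMap.smul_apply, sub_smul]
        abel_nf
    _ ≤ ε * ‖t - x‖ := hle

end Calculus

theorem isUnit_one_sub_of_norm_pow_lt_one {R : Type*} [NormedRing R] [HasSummableGeomSeries R]
    {x : R} {n : ℕ} (hx : ‖x ^ n‖ < 1) : IsUnit (1 - x) := by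
  have hcomm : Commute (1 - x) (∑ i ∈ Finset.range n, x ^ i) := by
    rw [Commute, SemiconjBy, mul_neg_geom_sum, geom_sum_mul_neg]
  refine (hcomm.isUnit_mul_iff.1 ?_).1
  rw [mul_neg_geom_sum]
  exact isUnit_one_sub_of_norm_lt_one hx

theorem contDiff_ringInverse_comp {𝕜 R Y : Type*} [NontriviallyNormedField 𝕜] [NormedRing R]
    [HasSummableGeomSeries R] [NormedAlgebra 𝕜 R] [NormedAddCommGroup Y] [NormedSpace 𝕜 Y]
    {T : Y → R} {n : WithTop ℕ∞} (hT : ContDiff 𝕜 n T) (hu : ∀ y, IsUnit (T y)) :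
    ContDiff 𝕜 n fun y => Ring.inverse (T y) := by
  refine contDiff_iff_contDiffAt.2 fun y => ?_
  obtain ⟨u, hu⟩ := hu y
  have hinv := contDiffAt_ringInverse 𝕜 (n := n) u
  rw [hu] at hinv
  exact hinv.comp y hT.contDiffAt

noncomputable section LinearODE

/-- Pointwise application of a continuous family of operators to a continuous function, as a
bounded bilinear map for the sup norms. -/
def pointwiseApply (𝕜 X E F : Type*) [NontriviallyNormedField 𝕜] [TopologicalSpace X]
    [CompactSpace X] [NormedAddCommGroup E] [NormedSpace 𝕜 E] [NormedAddCommGroup F]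
    [NormedSpace 𝕜 F] : C(X, E →L[𝕜] F) →L[𝕜] C(X, E) →L[𝕜] C(X, F) :=
  LinearMap.mkContinuous₂
    (LinearMap.mk₂ 𝕜 (fun (A : C(X, E →L[𝕜] F)) (g : C(X, E)) =>
        (⟨fun x => A x (g x), A.continuous.clm_apply g.continuous⟩ : C(X, F)))
      (fun _ _ _ => by ext; simp) (fun _ _ _ => by ext; simp)
      (fun _ _ _ => by ext; simp) (fun _ _ _ => by ext; simp)) 1 fun A g => by
    refine (ContinuousMap.norm_le _ (by positivity)).2 fun x => ?_
    rw [one_mul]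
    exact (A x).le_of_opNorm_le_of_le (A.norm_coe_le_norm x) (g.norm_coe_le_norm x)

variable {E : Type*} [NormedAddCommGroup E] [NormedSpace ℝ E] {c d : ℝ} (h : c ≤ d)

/-- The primitive vanishing at `c` of a continuous function on `[c, d]`, as a bounded operator. -/
def primitiveCLM : C(Icc c d, E) →L[ℝ] C(Icc c d, E) :=
  LinearMap.mkContinuous
    { toFun g := ⟨fun y => ∫ s in c..y, IccExtend h g s,
        (intervalIntegral.continuous_primitive
          (fun _ _ => g.continuous.Icc_extend'.intervalIntegrable _ _) c).comp
            continuous_subtype_val⟩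
      map_add' g g' := by
        ext y
        exact intervalIntegral.integral_add (g.continuous.Icc_extend'.intervalIntegrable _ _)
          (g'.continuous.Icc_extend'.intervalIntegrable _ _)
      map_smul' k g := by
        ext y
        exact intervalIntegral.integral_smul k (IccExtend h g) } (d - c) fun g => by
    refine (ContinuousMap.norm_le _ (mul_nonneg (sub_nonneg.2 h) (norm_nonneg g))).2 fun y => ?_
    refine (intervalIntegral.norm_integral_le_of_norm_le_const fun s _ =>
      g.norm_coe_le_norm (projIcc c d h s)).trans ?_
    rw [abs_of_nonneg (sub_nonneg.2 y.2.1), mul_comm]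
    gcongr
    exact y.2.2

/-- The Volterra operator `g ↦ ∫ s in c..·, A s (g s)`, as a bounded bilinear map of `(A, g)`. -/
def volterraCLM : C(Icc c d, E →L[ℝ] E) →L[ℝ] C(Icc c d, E) →L[ℝ] C(Icc c d, E) :=
  (ContinuousLinearMap.compL ℝ _ _ _ (primitiveCLM h)).comp (pointwiseApply ℝ (Icc c d) E E)

theorem volterraCLM_apply (A : C(Icc c d, E →L[ℝ] E)) (g : C(Icc c d, E)) (y : Icc c d) :
    volterraCLM h A g y = ∫ s in c..y, IccExtend h A s (IccExtend h g s) :=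
  rfl

theorem norm_volterraCLM_pow_apply_le (A : C(Icc c d, E →L[ℝ] E)) (g : C(Icc c d, E)) (n : ℕ)
    (y : Icc c d) :
    ‖(volterraCLM h A ^ n) g y‖ ≤ ‖A‖ ^ n * ‖g‖ / n.factorial * (y - c) ^ n := by
  induction n generalizing y with
  | zero => simpa using g.norm_coe_le_norm y
  | succ n ih =>
    rw [pow_succ', mul_apply_eq_comp, volterraCLM_apply]
    have hbound : ∀ s ∈ Ioc c (y : ℝ), ‖IccExtend h A s (IccExtend h ((volterraCLM h A ^ n) g) s)‖
        ≤ ‖A‖ * (‖A‖ ^ n * ‖g‖ / n.factorial * (s - c) ^ n) := fun s hs => by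
      have hs' : s ∈ Icc c d := ⟨hs.1.le, hs.2.trans y.2.2⟩
      rw [IccExtend_of_mem h _ hs', IccExtend_of_mem h _ hs']
      exact ContinuousLinearMap.le_of_opNorm_le_of_le _ (A.norm_coe_le_norm _) (ih _)
    refine (intervalIntegral.norm_integral_le_of_norm_le y.2.1 (.of_forall hbound)
      (Continuous.intervalIntegrable (by fun_prop) _ _)).trans_eq ?_
    rw [intervalIntegral.integral_const_mul, intervalIntegral.integral_const_mul,
      intervalIntegral.integral_comp_sub_right (fun s => s ^ n), integral_pow, sub_self,
      zero_pow n.succ_ne_zero, sub_zero, Nat.factorial_succ]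
    push_cast
    field_simp
    ring

variable [CompleteSpace E]

theorem isUnit_one_sub_volterraCLM (A : C(Icc c d, E →L[ℝ] E)) :
    IsUnit (1 - volterraCLM h A) := by
  obtain ⟨n, hn⟩ := ((FloorSemiring.tendsto_pow_div_factorial_atTop (‖A‖ * (d - c))).eventually
    (gt_mem_nhds one_pos)).exists
  have := sub_nonneg.2 h
  suffices hle : ‖volterraCLM h A ^ n‖ ≤ (‖A‖ * (d - c)) ^ n / n.factorial from
    isUnit_one_sub_of_norm_pow_lt_one (R := C(Icc c d, E) →L[ℝ] C(Icc c d, E)) (hle.trans_lt hn)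
  refine ContinuousLinearMap.opNorm_le_bound _ (by positivity) fun g => ?_
  refine (ContinuousMap.norm_le _ (by positivity)).2 fun y => ?_
  have hyc : 0 ≤ (y : ℝ) - c := sub_nonneg.2 y.2.1
  calc ‖(volterraCLM h A ^ n) g y‖
      ≤ ‖A‖ ^ n * ‖g‖ / n.factorial * (y - c) ^ n := norm_volterraCLM_pow_apply_le h A g n y
    _ ≤ ‖A‖ ^ n * ‖g‖ / n.factorial * (d - c) ^ n := by gcongr; exact y.2.2
    _ = (‖A‖ * (d - c)) ^ n / n.factorial * ‖g‖ := by rw [mul_pow]; ring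

/-- The solution on `[c, d]` of the linear initial value problem `S' = A S`, `S c = b`, obtained
by inverting the Volterra equation `S = b + volterraCLM h A S`. -/
def linearODESolution (A : C(Icc c d, E →L[ℝ] E)) (b : E) : C(Icc c d, E) :=
  Ring.inverse (1 - volterraCLM h A) (ContinuousMap.const _ b)

theorem contDiff_linearODESolution (b : E) {n : WithTop ℕ∞} :
    ContDiff ℝ n fun A : C(Icc c d, E →L[ℝ] E) => linearODESolution h A b := by
  have hT : ContDiff ℝ n fun A : C(Icc c d, E →L[ℝ] E) => 1 - volterraCLM h A := by fun_prop
  exact (contDiff_ringInverse_comp hT (isUnit_one_sub_volterraCLM h)).clm_apply contDiff_const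

theorem linearODESolution_apply (A : C(Icc c d, E →L[ℝ] E)) (b : E) (y : Icc c d) :
    linearODESolution h A b y
      = b + ∫ s in c..y, IccExtend h A s (IccExtend h (linearODESolution h A b) s) := by
  have hinv : (1 - volterraCLM h A) (linearODESolution h A b) = ContinuousMap.const _ b :=
    DFunLike.congr_fun (Ring.mul_inverse_cancel _ (isUnit_one_sub_volterraCLM h A))
      (ContinuousMap.const _ b)
  rw [← volterraCLM_apply]
  exact DFunLike.congr_fun (sub_eq_iff_eq_add.1 hinv) y

theorem linearODESolution_left (A : C(Icc c d, E →L[ℝ] E)) (b : E) :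
    IccExtend h (linearODESolution h A b) c = b := by
  rw [IccExtend_left, linearODESolution_apply, intervalIntegral.integral_same, add_zero]

theorem hasDerivWithinAt_linearODESolution (A : C(Icc c d, E →L[ℝ] E)) (b : E) {y : ℝ}
    (hy : y ∈ Icc c d) :
    HasDerivWithinAt (IccExtend h (linearODESolution h A b))
      (IccExtend h A y (IccExtend h (linearODESolution h A b) y)) (Icc c d) y := by
  have hcont : Continuous fun s => IccExtend h A s (IccExtend h (linearODESolution h A b) s) :=
    A.continuous.Icc_extend'.clm_apply (linearODESolution h A b).continuous.Icc_extend'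
  have hderiv := ((hcont.integral_hasStrictDerivAt c y).hasDerivAt.const_add b).hasDerivWithinAt
    (s := Icc c d)
  refine hderiv.congr_of_mem (fun t ht => ?_) hy
  rw [IccExtend_of_mem h _ ht, linearODESolution_apply]

end LinearODE

noncomputable section Slice

/-- The slice `A (x, ·)` as a continuous function on `t`; it has the junk value `0` if this slice
is not continuous on `t`. -/
def sliceMap {X Y F : Type*} [TopologicalSpace Y] [TopologicalSpace F] [Zero F] (t : Set Y)
    (A : X × Y → F) (x : X) : C(t, F) :=
  ContinuousMap.mkD (t.domRestrict fun y => A (x, y)) 0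

section Continuity

variable {X Y F : Type*} [TopologicalSpace X] [TopologicalSpace Y] [TopologicalSpace F] [Zero F]
  {A : X × Y → F} {s : Set X} {t : Set Y}

theorem sliceMap_apply (hA : ContinuousOn A (s ×ˢ t)) {x : X} (hx : x ∈ s) (y : t) :
    sliceMap t A x y = A (x, y) :=
  ContinuousMap.mkD_apply_of_continuousOn
    (hA.comp (Continuous.prodMk_right x).continuousOn fun _ hy => ⟨hx, hy⟩)

theorem continuousOn_sliceMap (hA : ContinuousOn A (s ×ˢ t)) : ContinuousOn (sliceMap t A) s :=
  ContinuousMap.continuousOn_mkD_restrict_of_uncurry (fun x y => A (x, y)) 0 hA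

end Continuity

theorem contDiffOn_sliceMap {𝕜 Y F : Type*} [RCLike 𝕜] [NormedAddCommGroup Y]
    [NormedSpace 𝕜 Y] [NormedAddCommGroup F] [NormedSpace 𝕜 F] {A : 𝕜 × Y → F} {M : Set 𝕜}
    {J t : Set Y} [CompactSpace t] (hM : IsOpen M) (hJ : IsOpen J) (htJ : t ⊆ J)
    (hA : ContDiffOn 𝕜 1 A (M ×ˢ J)) : ContDiffOn 𝕜 1 (sliceMap t A) M := by
  have hU : IsOpen (M ×ˢ J) := hM.prod hJ
  have hAc : ContinuousOn A (M ×ˢ t) := hA.continuousOn.mono (prod_mono_right htJ)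
  have hA'c : ContinuousOn (fun p => fderiv 𝕜 A p (1, 0)) (M ×ˢ t) :=
    ((hA.continuousOn_fderiv_of_isOpen hU le_rfl).clm_apply continuousOn_const).mono
      (prod_mono_right htJ)
  have hpartial : ∀ x ∈ M, ∀ y : t, HasDerivAt (fun s => sliceMap t A s y)
      (sliceMap t (fun p => fderiv 𝕜 A p (1, 0)) x y) x := fun x hx y => by
    have hdiff : HasFDerivAt A (fderiv 𝕜 A (x, y)) (x, y) :=
      ((hA.differentiableOn one_ne_zero).differentiableAt
        (hU.mem_nhds ⟨hx, htJ y.2⟩)).hasFDerivAt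
    rw [sliceMap_apply hA'c hx]
    refine (hdiff.comp_hasDerivAt x ((hasDerivAt_id x).prodMk
      (hasDerivAt_const x (y : Y)))).congr_of_eventuallyEq ?_
    filter_upwards [hM.mem_nhds hx] with s hs using sliceMap_apply hAc hs y
  have hderiv : ∀ x ∈ M, HasDerivAt (sliceMap t A)
      (sliceMap t (fun p => fderiv 𝕜 A p (1, 0)) x) x := fun x hx =>
    hasDerivAt_of_forall_eval (Filter.mem_of_superset (hM.mem_nhds hx) hpartial)
      ((continuousOn_sliceMap hA'c).continuousAt (hM.mem_nhds hx))
  rw [← zero_add 1, contDiffOn_succ_iff_deriv_of_isOpen hM, contDiffOn_zero]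
  exact ⟨fun x hx => (hderiv x hx).differentiableAt.differentiableWithinAt, by simp,
    (continuousOn_sliceMap hA'c).congr fun x hx => (hderiv x hx).deriv⟩

end Slice

theorem continuousOn_uncurry_IccExtend {X E : Type*} [TopologicalSpace X] [TopologicalSpace E]
    {s : Set X} {c d : ℝ} (h : c ≤ d) {T : X → C(Icc c d, E)} (hT : ContinuousOn T s) :
    ContinuousOn (fun p : X × ℝ => IccExtend h (T p.1) p.2) (s ×ˢ univ) :=
  continuous_eval.comp_continuousOn (f := fun p : X × ℝ => (T p.1, projIcc c d h p.2))
    ((hT.comp continuousOn_fst fun _ hp => hp.1).prodMk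
      (continuous_projIcc.comp continuous_snd).continuousOn)

theorem exists_contDiffOn_linearODE {E : Type*} [NormedAddCommGroup E] [NormedSpace ℝ E]
    [CompleteSpace E] {M J : Set ℝ} {c d : ℝ} (hM : IsOpen M) (hJ : IsOpen J) (h : c ≤ d)
    (hcd : Icc c d ⊆ J) {A : ℝ × ℝ → E →L[ℝ] E} (hA : ContDiffOn ℝ 1 A (M ×ˢ J)) (b : E) :
    ∃ S : ℝ × ℝ → E, ContDiffOn ℝ 1 S (M ×ˢ Ioo c d) ∧ (∀ x ∈ M, S (x, c) = b) ∧
      ∀ x ∈ M, ∀ y ∈ Icc c d,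
        HasDerivWithinAt (fun y => S (x, y)) (A (x, y) (S (x, y))) (Icc c d) y := by
  let T : ℝ → C(Icc c d, E) := fun x => linearODESolution h (sliceMap (Icc c d) A x) b
  let S : ℝ × ℝ → E := fun p => IccExtend h (T p.1) p.2
  have hT : ContDiffOn ℝ 1 T M := (contDiff_linearODESolution h b).comp_contDiffOn
    (contDiffOn_sliceMap hM hJ hcd hA)
  have hAc : ContinuousOn A (M ×ˢ Icc c d) := hA.continuousOn.mono (prod_mono_right hcd)
  have hSc : ContinuousOn S (M ×ˢ univ) := continuousOn_uncurry_IccExtend h hT.continuousOn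
  have hS'c := continuousOn_uncurry_IccExtend h (hT.continuousOn_deriv_of_isOpen hM le_rfl)
  have hSx : ∀ p ∈ M ×ˢ Ioo c d, HasDerivAt (fun x => S (x, p.2))
      (IccExtend h (⇑(deriv T p.1)) p.2) p.1 := fun p hp => by
    have hT' := ((hT.differentiableOn one_ne_zero).differentiableAt (hM.mem_nhds hp.1)).hasDerivAt
    exact (ContinuousMap.evalCLM ℝ (projIcc c d h p.2)).hasFDerivAt.comp_hasDerivAt p.1 hT'
  have hSy : ∀ x ∈ M, ∀ y ∈ Icc c d,
      HasDerivWithinAt (fun y => S (x, y)) (A (x, y) (S (x, y))) (Icc c d) y := fun x hx y hy => by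
    have hslice : IccExtend h (sliceMap (Icc c d) A x) y = A (x, y) := by
      rw [IccExtend_of_mem h _ hy, sliceMap_apply hAc hx]
    exact hslice ▸ hasDerivWithinAt_linearODESolution h (sliceMap (Icc c d) A x) b hy
  have hsub : M ×ˢ Ioo c d ⊆ M ×ˢ univ := prod_mono_right (subset_univ _)
  have hspan : Continuous (ContinuousLinearMap.toSpanSingleton ℝ : E → ℝ →L[ℝ] E) :=
    (ContinuousLinearMap.toSpanSingletonCLE (𝕜 := ℝ)).continuous
  refine ⟨S, contDiffOn_one_of_partial (hM.prod isOpen_Ioo)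
    (fun p hp => (hSx p hp).hasFDerivAt) (fun p hp => ((hSy p.1 hp.1 p.2
      (Ioo_subset_Icc_self hp.2)).hasDerivAt (Icc_mem_nhds hp.2.1 hp.2.2)).hasFDerivAt)
    (hspan.comp_continuousOn (hS'c.mono hsub)) (hspan.comp_continuousOn ?_),
    fun x _ => linearODESolution_left h _ b, hSy⟩
  exact (hAc.mono (prod_mono_right Ioo_subset_Icc_self)).clm_apply (hSc.mono hsub)

theorem isUnit_of_hasDerivWithinAt_mul {R : Type*} [NormedRing R] [NormedAlgebra ℝ R]
    [CompleteSpace R] {A G : ℝ → R} {c d : ℝ} (hA : ContinuousOn A (Icc c d))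
    (hG : ∀ y ∈ Icc c d, HasDerivWithinAt G (A y * G y) (Icc c d) y) (hGc : G c = 1) {y : ℝ}
    (hy : y ∈ Icc c d) : IsUnit (G y) := by
  have h : c ≤ d := hy.1.trans hy.2
  have hc : c ∈ Icc c d := left_mem_Icc.2 h
  -- `H` solves the adjoint equation `H' = -H A`, so that `H G` is constant.
  let B : C(Icc c d, R →L[ℝ] R) := ⟨fun y => -(ContinuousLinearMap.mul ℝ R).flip (A y),
    ((ContinuousLinearMap.mul ℝ R).flip.continuous.comp hA.domRestrict).neg⟩
  let H : ℝ → R := IccExtend h (linearODESolution h B 1)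
  have hHc : H c = 1 := linearODESolution_left h B 1
  have hH : ∀ y ∈ Icc c d, HasDerivWithinAt H (-(H y * A y)) (Icc c d) y := fun y hy => by
    refine (hasDerivWithinAt_linearODESolution h B 1 hy).congr_deriv ?_
    rw [IccExtend_of_mem h B hy]
    rfl
  have hHG : ∀ y ∈ Icc c d, H y * G y = 1 := fun y hy => by
    have hconst := (convex_Icc c d).norm_image_sub_le_of_norm_hasDerivWithin_le (C := 0)
      (fun s hs => (hH s hs).mul (hG s hs)) (fun s _ => by simp [mul_assoc]) hc hy
    rw [zero_mul, norm_le_zero_iff, sub_eq_zero] at hconst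
    simpa [hHc, hGc] using hconst
  -- `Z = G H - 1` solves the homogeneous linear equation `Z' = A Z - Z A`.
  obtain ⟨C, hC⟩ := isCompact_Icc.exists_bound_of_continuousOn hA
  have hZ : ∀ y ∈ Icc c d, HasDerivWithinAt (fun y => G y * H y - 1)
      (A y * (G y * H y - 1) - (G y * H y - 1) * A y) (Icc c d) y := fun y hy => by
    refine (((hG y hy).mul (hH y hy)).sub_const 1).congr_deriv ?_
    noncomm_ring
  have hGH := eq_zero_of_abs_deriv_le_mul_abs_self_of_eq_zero_right (K := 2 * C)
    (fun y hy => (hZ y hy).continuousWithinAt)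
    (fun y hy => (hZ y (Ico_subset_Icc_self hy)).mono_of_mem_nhdsWithin
      (Icc_mem_nhdsGE_of_mem hy)) (by simp [hGc, hHc]) (fun y hy => by
      refine (norm_sub_le_of_le (norm_mul_le _ _) (norm_mul_le _ _)).trans ?_
      have := hC y (Ico_subset_Icc_self hy)
      nlinarith [norm_nonneg (G y * H y - 1)]) y hy
  exact ⟨⟨G y, H y, sub_eq_zero.1 hGH, hHG y hy⟩, rfl⟩

theorem exists_contDiffOn_isUnit_fderiv_eq_mul {R : Type*} [NormedRing R] [NormedAlgebra ℝ R]
    [CompleteSpace R] {M J : Set ℝ} {c d : ℝ} (hM : IsOpen M) (hJ : IsOpen J) (h : c ≤ d)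
    (hcd : Icc c d ⊆ J) {A : ℝ × ℝ → R} (hA : ContDiffOn ℝ 1 A (M ×ˢ J)) :
    ∃ G : ℝ × ℝ → R, ContDiffOn ℝ 1 G (M ×ˢ Ioo c d) ∧
      ∀ p ∈ M ×ˢ Ioo c d, IsUnit (G p) ∧ fderiv ℝ G p (0, 1) = A p * G p := by
  obtain ⟨G, hG, hGc, hGy⟩ := exists_contDiffOn_linearODE hM hJ h hcd
    ((ContinuousLinearMap.mul ℝ R).contDiff.comp_contDiffOn hA) 1
  refine ⟨G, hG, fun p hp => ⟨?_, ?_⟩⟩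
  · refine isUnit_of_hasDerivWithinAt_mul (A := fun y => A (p.1, y)) (G := fun y => G (p.1, y))
      ?_ (hGy p.1 hp.1) (hGc p.1 hp.1) (Ioo_subset_Icc_self hp.2)
    exact hA.continuousOn.comp (Continuous.prodMk_right p.1).continuousOn
      fun y hy => ⟨hp.1, hcd hy⟩
  · have hderiv := (hGy p.1 hp.1 p.2 (Ioo_subset_Icc_self hp.2)).hasDerivAt
      (Icc_mem_nhds hp.2.1 hp.2.2)
    have hdiff := ((hG.differentiableOn one_ne_zero).differentiableAt
      ((hM.prod isOpen_Ioo).mem_nhds hp)).hasFDerivAt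
    exact (hdiff.comp_hasDerivAt p.2 ((hasDerivAt_const p.2 p.1).prodMk
      (hasDerivAt_id p.2))).unique hderiv

noncomputable section Gauge

variable {P V : Type*} [NormedAddCommGroup P] [NormedSpace ℝ P] [NormedAddCommGroup V]
  [NormedSpace ℝ V]

/-- The section `σ` of the trivial bundle with fibre `V` satisfies `Dσ + ωσ = 0` on `s`, that is,
it is parallel there for the connection with connection form `ω`. -/
def IsParallelOn (ω : P → P →L[ℝ] V →L[ℝ] V) (σ : P → V) (s : Set P) : Prop :=
  ∀ p ∈ s, HasFDerivAt σ (-(ω p).flip (σ p)) p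

variable {ω : P → P →L[ℝ] V →L[ℝ] V} {G : P → V →L[ℝ] V} {s : Set P}

theorem IsParallelOn.congr {σ τ : P → V} (hσ : IsParallelOn ω σ s) (hs : IsOpen s)
    (h : EqOn τ σ s) : IsParallelOn ω τ s := fun p hp => by
  rw [h hp]
  exact (hσ p hp).congr_of_eventuallyEq (h.eventuallyEq_of_mem (hs.mem_nhds hp))

/-- The connection form `G⁻¹ ω G + G⁻¹ dG` of the connection `ω` in the frame `G`. -/
def gaugeTransform (ω : P → P →L[ℝ] V →L[ℝ] V) (G : P → V →L[ℝ] V) (p : P) :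
    P →L[ℝ] V →L[ℝ] V :=
  (ContinuousLinearMap.compL ℝ V V V (Ring.inverse (G p))).comp
    (((ContinuousLinearMap.compL ℝ V V V).flip (G p)).comp (ω p) + fderiv ℝ G p)


theorem gaugeTransform_apply (p e : P) (v : V) :
    gaugeTransform ω G p e v = Ring.inverse (G p) (ω p e (G p v) + fderiv ℝ G p e v) :=
  rfl

theorem gaugeTransform_eq_zero {p e : P} (h : fderiv ℝ G p e = -ω p e * G p) :
    gaugeTransform ω G p e = 0 := by
  ext v
  simp [gaugeTransform_apply, h]

theorem IsParallelOn.of_gaugeTransform {w : P → V} (hw : IsParallelOn (gaugeTransform ω G) w s)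
    (hG : ∀ p ∈ s, DifferentiableAt ℝ G p) (hu : ∀ p ∈ s, IsUnit (G p)) :
    IsParallelOn ω (fun p => G p (w p)) s := fun p hp => by
  refine ((hG p hp).hasFDerivAt.clm_apply (hw p hp)).congr_fderiv ?_
  ext e
  have hinv (v : V) : G p (Ring.inverse (G p) v) = v :=
    DFunLike.congr_fun (Ring.mul_inverse_cancel _ (hu p hp)) v
  simp [gaugeTransform_apply, hinv]

variable [CompleteSpace V]

theorem IsParallelOn.gaugeTransform {σ : P → V} (hσ : IsParallelOn ω σ s)
    (hG : ∀ p ∈ s, DifferentiableAt ℝ G p) (hu : ∀ p ∈ s, IsUnit (G p)) :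
    IsParallelOn (gaugeTransform ω G) (fun p => Ring.inverse (G p) (σ p)) s := fun p hp => by
  obtain ⟨u, hu⟩ := hu p hp
  have hinv : HasFDerivAt Ring.inverse
      (-ContinuousLinearMap.mulLeftRight ℝ (V →L[ℝ] V) ↑u⁻¹ ↑u⁻¹) (G p) :=
    hu ▸ hasFDerivAt_ringInverse u
  refine ((hinv.comp p (hG p hp).hasFDerivAt).clm_apply (hσ p hp)).congr_fderiv ?_
  ext e
  have hmul (v : V) : (u : V →L[ℝ] V) ((↑u⁻¹ : V →L[ℝ] V) v) = v := DFunLike.congr_fun u.mul_inv v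
  simp [gaugeTransform_apply, ← hu, hmul, add_comm]

theorem continuousOn_gaugeTransform (hs : IsOpen s) (hω : ContinuousOn ω s)
    (hG : ContDiffOn ℝ 1 G s) (hu : ∀ p ∈ s, IsUnit (G p)) :
    ContinuousOn (gaugeTransform ω G) s := by
  have hinv : ContinuousOn (fun p => Ring.inverse (G p)) s := fun p hp => by
    obtain ⟨u, hu⟩ := hu p hp
    exact (hu ▸ NormedRing.inverse_continuousAt u).comp_continuousWithinAt (hG.continuousOn p hp)
  exact ((ContinuousLinearMap.compL ℝ V V V).continuous.comp_continuousOn hinv).clm_comp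
    ((((ContinuousLinearMap.compL ℝ V V V).flip.continuous.comp_continuousOn
      hG.continuousOn).clm_comp hω).add (hG.continuousOn_fderiv_of_isOpen hs le_rfl))

end Gauge

theorem exists_subset_Ioo_of_isCompact {α : Type*} [LinearOrder α] [TopologicalSpace α]
    [OrderTopology α] [DenselyOrdered α] [NoMinOrder α] [NoMaxOrder α] {K J : Set α}
    (hK : IsCompact K) (hne : K.Nonempty) (hJ : IsOpen J) (hKJ : K ⊆ J) :
    ∃ c ∈ J, ∃ d ∈ J, c ≤ d ∧ K ⊆ Ioo c d := by
  obtain ⟨l, hlK, hl⟩ := hK.exists_isLeast hne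
  obtain ⟨u, huK, hu⟩ := hK.exists_isGreatest hne
  obtain ⟨c, hcl, hcJ⟩ := (hJ.eventually_mem (hKJ hlK)).exists_lt
  obtain ⟨d, hud, hdJ⟩ := (hJ.eventually_mem (hKJ huK)).exists_gt
  exact ⟨c, hcJ, d, hdJ, (hcl.le.trans (hl huK)).trans hud.le,
    fun y hy => ⟨hcl.trans_le (hl hy), (hu hy).trans_lt hud⟩⟩

section GraphClosure

variable {X Y : Type*} [TopologicalSpace X] [TopologicalSpace Y] {f : X → Y} {D : Set X} {x : X}
  {y : Y}

theorem mem_closure_of_mk_mem_closure_graphOn (h : (x, y) ∈ closure (D.graphOn f)) :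
    x ∈ closure D :=
  map_mem_closure continuous_fst h fun _ hp => ((mem_graphOn).1 hp).1

theorem mem_of_mk_mem_closure_graphOn {K : Set Y} (hK : IsClosed K) (hf : MapsTo f D K)
    (h : (x, y) ∈ closure (D.graphOn f)) : y ∈ K :=
  hK.closure_subset <| map_mem_closure continuous_snd h fun p hp => by
    obtain ⟨hD, hp⟩ := (mem_graphOn).1 hp
    exact hp ▸ hf hD

theorem eq_of_mk_mem_closure_graphOn [T2Space Y] (hf : ContinuousAt f x)
    (h : (x, y) ∈ closure (D.graphOn f)) : f x = y :=
  tendsto_nhds_unique_of_frequently_eq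
    (ContinuousAt.comp (f := Prod.fst) (x := (x, y)) hf continuousAt_fst)
    (continuousAt_snd (p := (x, y)))
    ((mem_closure_iff_frequently.1 h).mono fun _ hp => ((mem_graphOn).1 hp).2)

end GraphClosure

section VerticalReach

variable {X : Type*} {s : Set (X × ℝ)} {c : ℝ} {p : X × ℝ}

/-- The points which are joined to height `c` by a vertical segment contained in `s`. -/
def verticalReach (s : Set (X × ℝ)) (c : ℝ) : Set (X × ℝ) :=
  {p | ∀ y ∈ uIcc c p.2, (p.1, y) ∈ s}

theorem eventually_mk_mem_verticalReach [TopologicalSpace X] (hs : IsOpen s)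
    (hp : p ∈ verticalReach s c) : ∀ᶠ x in 𝓝 p.1, (x, p.2) ∈ verticalReach s c :=
  isCompact_uIcc.eventually_forall_of_forall_eventually fun y hy =>
    hs.eventually_mem (hp y hy)

variable {V : Type*} [NormedAddCommGroup V] [NormedSpace ℝ V]
  {θ : ℝ × ℝ → ℝ × ℝ →L[ℝ] V →L[ℝ] V} {w : ℝ × ℝ → V} {s : Set (ℝ × ℝ)} {p : ℝ × ℝ}

theorem IsParallelOn.eq_of_mem_verticalReach (hw : IsParallelOn θ w s)
    (hθ : ∀ q ∈ s, θ q (0, 1) = 0) (hp : p ∈ verticalReach s c) : w p = w (p.1, c) := by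
  have hderiv : ∀ y ∈ uIcc c p.2, HasDerivWithinAt (fun y => w (p.1, y)) 0 (uIcc c p.2) y :=
    fun y hy => by
      refine ((hw _ (hp y hy)).comp_hasDerivAt y ((hasDerivAt_const y p.1).prodMk
        (hasDerivAt_id y))).hasDerivWithinAt.congr_deriv ?_
      simp [hθ _ (hp y hy)]
  have hconst := (convex_uIcc c p.2).norm_image_sub_le_of_norm_hasDerivWithin_le (C := 0) hderiv
    (by simp) left_mem_uIcc right_mem_uIcc
  rwa [zero_mul, norm_le_zero_iff, sub_eq_zero] at hconst

theorem IsParallelOn.hasDerivAt_of_mem_verticalReach (hw : IsParallelOn θ w s) (hs : IsOpen s)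
    (hθ : ∀ q ∈ s, θ q (0, 1) = 0) (hp : p ∈ verticalReach s c) :
    HasDerivAt (fun x => w (x, c)) (-θ p (1, 0) (w (p.1, c))) p.1 := by
  have hderiv : HasDerivAt (fun x => w (x, p.2)) (-θ p (1, 0) (w p)) p.1 :=
    ((hw p (hp p.2 right_mem_uIcc)).comp_hasDerivAt p.1
      ((hasDerivAt_id p.1).prodMk (hasDerivAt_const p.1 p.2))).congr_deriv rfl
  rw [hw.eq_of_mem_verticalReach hθ hp] at hderiv
  refine hderiv.congr_of_eventuallyEq ?_
  filter_upwards [eventually_mk_mem_verticalReach hs hp] with x hx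
    using (hw.eq_of_mem_verticalReach hθ hx).symm

theorem IsParallelOn.eq_of_mem_closure_verticalReach (hw : IsParallelOn θ w s)
    (hθ : ∀ q ∈ s, θ q (0, 1) = 0) (hp : p ∈ closure (verticalReach s c)) (hps : p ∈ s)
    (hpc : (p.1, c) ∈ s) : w p = w (p.1, c) := by
  have hlim : ContinuousAt (fun q : ℝ × ℝ => w (q.1, c)) p :=
    ContinuousAt.comp (f := fun q : ℝ × ℝ => (q.1, c)) (hw _ hpc).continuousAt (by fun_prop)
  exact tendsto_nhds_unique_of_frequently_eq (hw p hps).continuousAt hlim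
    ((mem_closure_iff_frequently.1 hp).mono fun _ hq => hw.eq_of_mem_verticalReach hθ hq)

theorem IsParallelOn.hasDerivAt_of_mem_closure_verticalReach (hw : IsParallelOn θ w s)
    (hs : IsOpen s) (hθ : ∀ q ∈ s, θ q (0, 1) = 0) (hp : p ∈ closure (verticalReach s c))
    (hpc : (p.1, c) ∈ s) (hθp : ContinuousAt θ p) (hθc : ContinuousAt θ (p.1, c)) :
    HasDerivAt (fun x => w (x, c)) (-θ p (1, 0) (w (p.1, c))) p.1 := by
  have hproj : ContinuousAt (fun q : ℝ × ℝ => (q.1, c)) p := by fun_prop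
  have hwc : ContinuousAt (fun q : ℝ × ℝ => w (q.1, c)) p :=
    ContinuousAt.comp (f := fun q : ℝ × ℝ => (q.1, c)) (hw _ hpc).continuousAt hproj
  have hθc' : ContinuousAt (fun q : ℝ × ℝ => θ (q.1, c)) p :=
    ContinuousAt.comp (f := fun q : ℝ × ℝ => (q.1, c)) hθc hproj
  have hreach : (p.1, c) ∈ verticalReach s c := by simpa [verticalReach] using hpc
  have hcoeff : θ p (1, 0) (w (p.1, c)) = θ (p.1, c) (1, 0) (w (p.1, c)) := by
    refine tendsto_nhds_unique_of_frequently_eq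
      ((hθp.clm_apply continuousAt_const).clm_apply hwc).tendsto
      ((hθc'.clm_apply continuousAt_const).clm_apply hwc).tendsto
      ((mem_closure_iff_frequently.1 hp).mono fun q hq => neg_injective ?_)
    refine (hw.hasDerivAt_of_mem_verticalReach hs hθ hq).unique
      (hw.hasDerivAt_of_mem_verticalReach (p := (q.1, c)) hs hθ ?_)
    simpa [verticalReach] using hq c left_mem_uIcc
  exact hcoeff ▸ hw.hasDerivAt_of_mem_verticalReach hs hθ hreach

end VerticalReach

theorem eq_of_hasDerivAt_neg_apply {V : Type*} [NormedAddCommGroup V] [NormedSpace ℝ V]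
    {u v : ℝ → V} {B : ℝ → V →L[ℝ] V} {a b C : ℝ} (hab : a ≤ b)
    (hu : ∀ x ∈ Icc a b, HasDerivAt u (-B x (u x)) x)
    (hv : ∀ x ∈ Icc a b, HasDerivAt v (-B x (v x)) x) (hB : ∀ x ∈ Icc a b, ‖B x‖ ≤ C)
    (h : u a = v a) : u b = v b := by
  have hderiv : ∀ x ∈ Icc a b, HasDerivAt (u - v) (-B x ((u - v) x)) x := fun x hx =>
    ((hu x hx).sub (hv x hx)).congr_deriv (by simp [neg_add_eq_sub])
  exact sub_eq_zero.1 <| eq_zero_of_abs_deriv_le_mul_abs_self_of_eq_zero_right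
    (fun x hx => (hderiv x hx).continuousAt.continuousWithinAt)
    (fun x hx => (hderiv x (Ico_subset_Icc_self hx)).hasDerivWithinAt) (sub_eq_zero.2 h)
    (fun x hx => by
      rw [norm_neg]
      exact (B x).le_of_opNorm_le (hB x (Ico_subset_Icc_self hx)) _) b (right_mem_Icc.2 hab)

section Edges

variable {V : Type*} [NormedAddCommGroup V] [NormedSpace ℝ V]
  {θ : ℝ × ℝ → ℝ × ℝ →L[ℝ] V →L[ℝ] V} {w : ℝ × ℝ → V} {s : Set (ℝ × ℝ)} {M J : Set ℝ} {a c d : ℝ}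

-- Evaluated along points which both heights reach in the limit, `θ` is the coefficient of one
-- linear equation solved by both edge values.
theorem IsParallelOn.eq_of_forall_mem_closure_inter {b : ℝ} (hw : IsParallelOn θ w s)
    (hs : IsOpen s) (hθs : ∀ q ∈ s, θ q (0, 1) = 0)
    (hθ : ∀ p ∈ Icc a b ×ˢ uIcc c d, ContinuousAt θ p) (hab : a ≤ b)
    (hc : ∀ x ∈ Icc a b, (x, c) ∈ s) (hd : ∀ x ∈ Icc a b, (x, d) ∈ s)
    (hreach : ∀ x ∈ Icc a b, ∃ y ∈ uIcc c d,
      (x, y) ∈ closure (verticalReach s c) ∩ closure (verticalReach s d))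
    (ha : w (a, c) = w (a, d)) : w (b, c) = w (b, d) := by
  choose! g hg hgreach using hreach
  obtain ⟨C, hC⟩ := (isCompact_Icc.prod isCompact_uIcc).exists_bound_of_continuousOn
    (f := fun p => θ p (1, 0))
    fun p hp => ((hθ p hp).clm_apply continuousAt_const).continuousWithinAt
  refine eq_of_hasDerivAt_neg_apply (u := fun x => w (x, c)) (v := fun x => w (x, d))
    (B := fun x => θ (x, g x) (1, 0)) hab (fun x hx => ?_) (fun x hx => ?_)
    (fun x hx => hC _ ⟨hx, hg x hx⟩) ha
  · exact hw.hasDerivAt_of_mem_closure_verticalReach hs hθs (hgreach x hx).1 (hc x hx)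
      (hθ _ ⟨hx, hg x hx⟩) (hθ _ ⟨hx, left_mem_uIcc⟩)
  · exact hw.hasDerivAt_of_mem_closure_verticalReach hs hθs (hgreach x hx).2 (hd x hx)
      (hθ _ ⟨hx, hg x hx⟩) (hθ _ ⟨hx, right_mem_uIcc⟩)

theorem isParallelOn_comp_fst {v : ℝ → V} (hθs : ∀ p ∈ s, θ p (0, 1) = 0)
    (hv : ∀ p ∈ s, HasDerivAt v (-θ p (1, 0) (v p.1)) p.1) :
    IsParallelOn θ (fun p => v p.1) s := fun p hp => by
  refine ((hv p hp).hasFDerivAt.comp p hasFDerivAt_fst).congr_fderiv ?_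
  ext <;> simp [hθs p hp]

theorem IsParallelOn.exists_isParallelOn_fst (hw : IsParallelOn θ w s) (hs : IsOpen s)
    (hsU : s ⊆ M ×ˢ J) (hM : IsOpen M) (hJ : IsOpen J) (hθ : ContinuousOn θ (M ×ˢ J))
    (hθU : ∀ p ∈ M ×ˢ J, θ p (0, 1) = 0) (hc : ∀ x ∈ M, (x, c) ∈ s) (hd : ∀ x ∈ M, (x, d) ∈ s)
    (hcd : ∀ x ∈ M, w (x, c) = w (x, d))
    (hreach : M ×ˢ J ⊆ closure (verticalReach s c) ∪ closure (verticalReach s d)) :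
    ∃ v : ℝ → V, IsParallelOn θ (fun p => v p.1) (M ×ˢ J) ∧ ∀ p ∈ s, v p.1 = w p := by
  have hθs : ∀ p ∈ s, θ p (0, 1) = 0 := fun p hp => hθU p (hsU hp)
  have hθat : ∀ p ∈ M ×ˢ J, ContinuousAt θ p := fun p hp =>
    hθ.continuousAt ((hM.prod hJ).mem_nhds hp)
  refine ⟨fun x => w (x, c), isParallelOn_comp_fst (v := fun x => w (x, c)) hθU fun p hp => ?_,
    fun p hp => ?_⟩
  · rcases hreach hp with hpc | hpd
    · exact hw.hasDerivAt_of_mem_closure_verticalReach hs hθs hpc (hc _ hp.1) (hθat p hp)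
        (hθat _ (hsU (hc _ hp.1)))
    · rw [hcd _ hp.1]
      refine (hw.hasDerivAt_of_mem_closure_verticalReach hs hθs hpd (hd _ hp.1) (hθat p hp)
        (hθat _ (hsU (hd _ hp.1)))).congr_of_eventuallyEq ?_
      filter_upwards [hM.mem_nhds hp.1] with x hx using hcd x hx
  · rcases hreach (hsU hp) with hpc | hpd
    · exact (hw.eq_of_mem_closure_verticalReach hθs hpc hp (hc _ (hsU hp).1)).symm
    · exact (hcd _ (hsU hp).1).trans
        (hw.eq_of_mem_closure_verticalReach hθs hpd hp (hd _ (hsU hp).1)).symm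

end Edges

section GraphComplement

variable {M J K : Set ℝ} {a c d x y : ℝ} {f : ℝ → ℝ}

/-- The complement in `M × J` of the closure `F̄` of the graph of `f` over `{x ∈ M | a < x}`. -/
def graphComplement (M J : Set ℝ) (a : ℝ) (f : ℝ → ℝ) : Set (ℝ × ℝ) :=
  (M ×ˢ J) \ closure ((M ∩ Ioi a).graphOn f)

theorem isOpen_graphComplement (hM : IsOpen M) (hJ : IsOpen J) :
    IsOpen (graphComplement M J a f) :=
  (hM.prod hJ).sdiff isClosed_closure

theorem mk_mem_graphComplement (hK : IsClosed K) (hf : MapsTo f (M ∩ Ioi a) K) (hx : x ∈ M)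
    (hy : y ∈ J) (hyK : y ∉ K) : (x, y) ∈ graphComplement M J a f :=
  ⟨⟨hx, hy⟩, fun hcl => hyK (mem_of_mk_mem_closure_graphOn hK hf hcl)⟩

theorem mk_mem_verticalReach_of_notMem_uIcc (hM : IsOpen M) (hJ : J.OrdConnected)
    (hf : ContinuousOn f (M ∩ Ioi a)) (hc : c ∈ J) (hx : x ∈ M) (hax : a < x) (hy : y ∈ J)
    (hfx : f x ∉ uIcc c y) : (x, y) ∈ verticalReach (graphComplement M J a f) c := fun t ht => by
  refine ⟨⟨hx, hJ.uIcc_subset hc hy ht⟩, fun hcl => hfx ?_⟩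
  exact (eq_of_mk_mem_closure_graphOn
    (hf.continuousAt ((hM.inter isOpen_Ioi).mem_nhds ⟨hx, hax⟩)) hcl) ▸ ht

theorem mk_mem_closure_verticalReach_of_lt (hM : IsOpen M) (hJ : J.OrdConnected)
    (hf : ContinuousOn f (M ∩ Ioi a)) (hc : c ∈ J) (hx : x ∈ M) (hax : a < x) (hfx : f x ∈ J)
    (hne : c ≠ f x) : (x, f x) ∈ closure (verticalReach (graphComplement M J a f) c) := by
  have hmem : f x ∈ closure (uIoo c (f x)) := by
    rw [closure_uIoo hne]
    exact right_mem_uIcc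
  refine map_mem_closure (Continuous.prodMk_right x) hmem fun t ht => ?_
  refine mk_mem_verticalReach_of_notMem_uIcc hM hJ hf hc hx hax
    (hJ.uIcc_subset hc hfx (uIoo_subset_uIcc_self ht)) ?_
  grind [uIoo, mem_uIcc]

theorem mk_mem_closure_verticalReach_of_le (hM : IsOpen M) (hJ : J.OrdConnected) (hc : c ∈ J)
    (hx : x ∈ M) (hxa : x ≤ a) (hy : y ∈ J) :
    (x, y) ∈ closure (verticalReach (graphComplement M J a f) c) := by
  have hmem : x ∈ closure (M ∩ Iio a) := hM.inter_closure ⟨hx, by rwa [closure_Iio]⟩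
  refine map_mem_closure (f := fun t => (t, y)) (by fun_prop) hmem fun t ht u hu => ?_
  refine ⟨⟨ht.1, hJ.uIcc_subset hc hy hu⟩, fun hcl => (mem_Iio.1 ht.2).not_ge ?_⟩
  exact closure_minimal (fun _ hq => le_of_lt hq.2) isClosed_Ici
    (mem_closure_of_mk_mem_closure_graphOn hcl)

theorem exists_mk_mem_closure_verticalReach_inter (hM : IsOpen M) (hJ : J.OrdConnected)
    (hf : ContinuousOn f (M ∩ Ioi a)) (hc : c ∈ J) (hd : d ∈ J)
    (hfcd : MapsTo f (M ∩ Ioi a) (Ioo c d)) (hx : x ∈ M) :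
    ∃ y ∈ uIcc c d, (x, y) ∈ closure (verticalReach (graphComplement M J a f) c) ∩
      closure (verticalReach (graphComplement M J a f) d) := by
  rcases le_or_gt x a with hxa | hax
  · exact ⟨c, left_mem_uIcc, mk_mem_closure_verticalReach_of_le hM hJ hc hx hxa hc,
      mk_mem_closure_verticalReach_of_le hM hJ hd hx hxa hc⟩
  · have hfx := hfcd ⟨hx, hax⟩
    have hfJ : f x ∈ J := hJ.out hc hd (Ioo_subset_Icc_self hfx)
    exact ⟨f x, Icc_subset_uIcc (Ioo_subset_Icc_self hfx),
      mk_mem_closure_verticalReach_of_lt hM hJ hf hc hx hax hfJ hfx.1.ne,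
      mk_mem_closure_verticalReach_of_lt hM hJ hf hd hx hax hfJ hfx.2.ne'⟩

theorem prod_subset_closure_verticalReach_union (hM : IsOpen M) (hJ : J.OrdConnected)
    (hf : ContinuousOn f (M ∩ Ioi a)) (hc : c ∈ J) (hd : d ∈ J)
    (hfcd : MapsTo f (M ∩ Ioi a) (Ioo c d)) :
    M ×ˢ J ⊆ closure (verticalReach (graphComplement M J a f) c) ∪
      closure (verticalReach (graphComplement M J a f) d) := by
  rintro ⟨x, y⟩ ⟨hx, hy⟩
  rcases le_or_gt x a with hxa | hax
  · exact .inl (mk_mem_closure_verticalReach_of_le hM hJ hc hx hxa hy)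
  have hfx := hfcd ⟨hx, hax⟩
  rcases lt_trichotomy y (f x) with hyf | rfl | hfy
  · exact .inl <| subset_closure <| mk_mem_verticalReach_of_notMem_uIcc hM hJ hf hc hx hax hy <|
      notMem_uIcc_of_gt hfx.1 hyf
  · exact .inl (mk_mem_closure_verticalReach_of_lt hM hJ hf hc hx hax hy hfx.1.ne)
  · exact .inr <| subset_closure <| mk_mem_verticalReach_of_notMem_uIcc hM hJ hf hd hx hax hy <|
      notMem_uIcc_of_lt hfx.2 hfy

variable {V : Type*} [NormedAddCommGroup V] [NormedSpace ℝ V]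

theorem IsParallelOn.exists_isParallelOn_fst_of_graphComplement
    {θ : ℝ × ℝ → ℝ × ℝ →L[ℝ] V →L[ℝ] V} {w : ℝ × ℝ → V} (hM : IsOpen M) (hM' : M.OrdConnected)
    (hJ : IsOpen J) (hJ' : J.OrdConnected) (ha : a ∈ M) (hf : ContinuousOn f (M ∩ Ioi a))
    (hK : IsCompact K) (hKJ : K ⊆ J) (hfK : MapsTo f (M ∩ Ioi a) K)
    (hθ : ContinuousOn θ (M ×ˢ J)) (hθv : ∀ p ∈ M ×ˢ J, θ p (0, 1) = 0)
    (hw : IsParallelOn θ w (graphComplement M J a f)) :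
    ∃ v : ℝ → V, IsParallelOn θ (fun p => v p.1) (M ×ˢ J) ∧
      ∀ p ∈ graphComplement M J a f, v p.1 = w p := by
  obtain ⟨t, hat, ht⟩ := (hM.eventually_mem ha).exists_gt
  obtain ⟨c, hc, d, hd, -, hKcd⟩ := exists_subset_Ioo_of_isCompact hK ⟨_, hfK ⟨ht, hat⟩⟩ hJ hKJ
  have hfcd : MapsTo f (M ∩ Ioi a) (Ioo c d) := hfK.mono_right hKcd
  have hs : IsOpen (graphComplement M J a f) := isOpen_graphComplement hM hJ
  have hcs : ∀ x ∈ M, (x, c) ∈ graphComplement M J a f := fun x hx =>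
    mk_mem_graphComplement hK.isClosed hfK hx hc fun hcK => (hKcd hcK).1.false
  have hds : ∀ x ∈ M, (x, d) ∈ graphComplement M J a f := fun x hx =>
    mk_mem_graphComplement hK.isClosed hfK hx hd fun hdK => (hKcd hdK).2.false
  have hleft : ∀ x ∈ M, x ≤ a → w (x, c) = w (x, d) := fun x hx hxa =>
    hw.eq_of_mem_closure_verticalReach (p := (x, c)) (fun q hq => hθv q hq.1)
      (mk_mem_closure_verticalReach_of_le hM hJ' hd hx hxa hc) (hcs x hx) (hds x hx)
  refine hw.exists_isParallelOn_fst hs sdiff_subset hM hJ hθ hθv hcs hds (fun x hx => ?_)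
    (prod_subset_closure_verticalReach_union hM hJ' hf hc hd hfcd)
  rcases le_total x a with hxa | hax
  · exact hleft x hx hxa
  have hsub : Icc a x ⊆ M := hM'.out ha hx
  have hsub₂ : Icc a x ×ˢ uIcc c d ⊆ M ×ˢ J := prod_mono hsub (hJ'.uIcc_subset hc hd)
  exact hw.eq_of_forall_mem_closure_inter hs (fun q hq => hθv q hq.1)
    (fun p hp => hθ.continuousAt ((hM.prod hJ).mem_nhds (hsub₂ hp))) hax
    (fun z hz => hcs z (hsub hz)) (fun z hz => hds z (hsub hz))
    (fun z hz => exists_mk_mem_closure_verticalReach_inter hM hJ' hf hc hd hfcd (hsub hz))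
    (hleft a ha le_rfl)

variable [CompleteSpace V] {ω : ℝ × ℝ → ℝ × ℝ →L[ℝ] V →L[ℝ] V} {σ : ℝ × ℝ → V}

theorem IsParallelOn.exists_extension_prod_Ioo (hM : IsOpen M) (hM' : M.OrdConnected)
    (hJ : IsOpen J) (ha : a ∈ M) (hf : ContinuousOn f (M ∩ Ioi a)) (hcd : c ≤ d)
    (hcdJ : Icc c d ⊆ J) (hK : IsCompact K) (hKcd : K ⊆ Ioo c d) (hfK : MapsTo f (M ∩ Ioi a) K)
    (hω : ContinuousOn ω (M ×ˢ J)) (hωv : ContDiffOn ℝ 1 (fun p => ω p (0, 1)) (M ×ˢ J))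
    (hσ : IsParallelOn ω σ (graphComplement M (Ioo c d) a f)) :
    ∃ τ : ℝ × ℝ → V, IsParallelOn ω τ (M ×ˢ Ioo c d) ∧
      EqOn τ σ (graphComplement M (Ioo c d) a f) := by
  obtain ⟨G, hG, hGp⟩ := exists_contDiffOn_isUnit_fderiv_eq_mul hM hJ hcd hcdJ hωv.neg
  have hU : IsOpen (M ×ˢ Ioo c d) := hM.prod isOpen_Ioo
  have hu : ∀ p ∈ M ×ˢ Ioo c d, IsUnit (G p) := fun p hp => (hGp p hp).1
  have hGd : ∀ p ∈ M ×ˢ Ioo c d, DifferentiableAt ℝ G p := fun p hp =>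
    (hG.differentiableOn one_ne_zero).differentiableAt (hU.mem_nhds hp)
  obtain ⟨v, hv, hvw⟩ := IsParallelOn.exists_isParallelOn_fst_of_graphComplement hM hM' isOpen_Ioo
    ordConnected_Ioo ha hf hK hKcd hfK
    (continuousOn_gaugeTransform hU
      (hω.mono (prod_mono_right (Ioo_subset_Icc_self.trans hcdJ))) hG hu)
    (fun p hp => gaugeTransform_eq_zero (hGp p hp).2)
    (hσ.gaugeTransform (fun p hp => hGd p hp.1) fun p hp => hu p hp.1)
  refine ⟨fun p => G p (v p.1), hv.of_gaugeTransform hGd hu, fun p hp => ?_⟩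
  change G p (v p.1) = σ p
  rw [hvw p hp]
  exact DFunLike.congr_fun (Ring.mul_inverse_cancel _ (hu p hp.1)) (σ p)

end GraphComplement

theorem stmt19_general {V : Type*} [NormedAddCommGroup V] [NormedSpace ℝ V] [CompleteSpace V]
    {M J K : Set ℝ} (hM : IsOpen M) (hM' : M.OrdConnected) (hJ : IsOpen J) (hJ' : J.OrdConnected)
    {a : ℝ} (ha : a ∈ M) {f : ℝ → ℝ} (hf : ContinuousOn f (M ∩ Ioi a)) (hK : IsCompact K)
    (hKJ : K ⊆ J) (hfK : MapsTo f (M ∩ Ioi a) K) {ω : ℝ × ℝ → ℝ × ℝ →L[ℝ] V →L[ℝ] V}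
    (hω : ContinuousOn ω (M ×ˢ J)) (hωv : ContDiffOn ℝ 1 (fun p => ω p (0, 1)) (M ×ˢ J))
    {σ : ℝ × ℝ → V} (hσ : IsParallelOn ω σ (graphComplement M J a f)) :
    ∃ τ : ℝ × ℝ → V, IsParallelOn ω τ (M ×ˢ J) ∧ EqOn τ σ (graphComplement M J a f) := by
  classical
  obtain ⟨t, hat, ht⟩ := (hM.eventually_mem ha).exists_gt
  obtain ⟨c, hc, d, hd, hcd, hKcd⟩ := exists_subset_Ioo_of_isCompact hK ⟨_, hfK ⟨ht, hat⟩⟩ hJ hKJ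
  have hcdJ : Icc c d ⊆ J := hJ'.out hc hd
  have hsub : M ×ˢ Ioo c d ⊆ M ×ˢ J := prod_mono_right (Ioo_subset_Icc_self.trans hcdJ)
  obtain ⟨τ, hτ, hτσ⟩ := IsParallelOn.exists_extension_prod_Ioo hM hM' hJ ha hf hcd hcdJ hK hKcd
    hfK hω hωv (fun p hp => hσ p ⟨hsub hp.1, hp.2⟩)
  have heq : EqOn ((M ×ˢ Ioo c d).piecewise τ σ) σ (graphComplement M J a f) := fun p hp => by
    by_cases hp' : p ∈ M ×ˢ Ioo c d
    · exact (piecewise_eq_of_mem _ _ _ hp').trans (hτσ ⟨hp', hp.2⟩)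
    · exact piecewise_eq_of_notMem _ _ _ hp'
  refine ⟨_, fun p hp => ?_, heq⟩
  by_cases hpK : p.2 ∈ K
  · exact hτ.congr (hM.prod isOpen_Ioo) (piecewise_eqOn _ _ _) p ⟨hp.1, hKcd hpK⟩
  · exact hσ.congr (isOpen_graphComplement hM hJ) heq p
      (mk_mem_graphComplement hK.isClosed hfK hp.1 hp.2 hpK)

/-- Let `M, J ⊆ ℝ` be open intervals, `a ∈ M`, and `f` continuous on
`{x ∈ M | x > a}` with image relatively compact in `J`. Let `F̄` be the closure in
`M × J` of the graph of `f`. Then for every (trivial rank-`r`) vector bundle over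
`M × J` with a connection of class `C¹` given by its connection form `ω`, every
`∇`-parallel section `σ` (i.e. `Dσ + ωσ = 0`) defined on `(M × J) \ F̄` extends to a
`∇`-parallel section on all of `M × J`. -/
theorem stmt19 (M J : Set ℝ) (hMo : IsOpen M) (hMc : M.OrdConnected)
    (hJo : IsOpen J) (hJc : J.OrdConnected)
    (a : ℝ) (haM : a ∈ M)
    (f : ℝ → ℝ) (hf : ContinuousOn f (M ∩ Set.Ioi a))
    (hcpt : ∃ K : Set ℝ, IsCompact K ∧ K ⊆ J ∧ f '' (M ∩ Set.Ioi a) ⊆ K)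
    (r : ℕ)
    (ω : ℝ × ℝ → (ℝ × ℝ) →L[ℝ] ((Fin r → ℝ) →L[ℝ] (Fin r → ℝ)))
    (hω : ContDiffOn ℝ 1 ω (M ×ˢ J))
    (Fbar : Set (ℝ × ℝ))
    (hFbar : Fbar =
      closure {p : ℝ × ℝ | ∃ x ∈ M ∩ Set.Ioi a, p = (x, f x)} ∩ (M ×ˢ J))
    (σ : ℝ × ℝ → Fin r → ℝ)
    (hσ : ∀ p ∈ (M ×ˢ J) \ Fbar, HasFDerivAt σ (-(ω p).flip (σ p)) p) :
    ∃ τ : ℝ × ℝ → Fin r → ℝ,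
      (∀ p ∈ M ×ˢ J, HasFDerivAt τ (-(ω p).flip (τ p)) p) ∧
      ∀ p ∈ (M ×ˢ J) \ Fbar, τ p = σ p := by
  obtain ⟨K, hK, hKJ, hfK⟩ := hcpt
  have hcompl : (M ×ˢ J) \ Fbar = graphComplement M J a f := by
    simp only [hFbar, sdiff_inter_self_eq_sdiff, graphComplement, graphOn, image, eq_comm]
  rw [hcompl] at hσ ⊢
  exact stmt19_general hMo hMc hJo hJc haM hf hK hKJ (image_subset_iff.1 hfK) hω.continuousOn
    (hω.clm_apply contDiffOn_const) hσ
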